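/- Let n ≥ 2. For every transposition σ in S_n and every x ∈ S_n, one has c(σ, x) + c(σ, σ·x) = 1 in Z/2Z. (This is the algebraic form of the vertical- and horizontal-annulus rules (V) and (H) for the induced sign assignment.) -/

import Mathlib

open Equiv
open scoped Classical

/-- Generator `z` as an element of the free group. -/
def zF (n : ℕ) : FreeGroup (Fin (n-1) ⊕ Unit) := FreeGroup.of (Sum.inr ())

/-- Generator `τ̃ᵢ` as an element of the free group. -/
def tF (n : ℕ) (i : Fin (n-1)) : FreeGroup (Fin (n-1) ⊕ Unit) := FreeGroup.of (Sum.inl i)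

/-- Relations of the spin extension of the symmetric group. -/
def spinRels (n : ℕ) : Set (FreeGroup (Fin (n-1) ⊕ Unit)) :=
  {zF n * zF n} ∪
  {w | ∃ i : Fin (n-1), w = zF n * tF n i * (tF n i * zF n)⁻¹} ∪
  {w | ∃ i : Fin (n-1), w = tF n i * tF n i * (zF n)⁻¹} ∪
  {w | ∃ i j : Fin (n-1), 1 < |(i : ℤ) - (j : ℤ)| ∧ w = tF n i * tF n j * (zF n * tF n j * tF n i)⁻¹} ∪
  {w | ∃ i j : Fin (n-1), (j : ℕ) = (i : ℕ) + 1 ∧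
        w = tF n i * tF n j * tF n i * (tF n j * tF n i * tF n j)⁻¹}

/-- The spin extension `S̃ₙ` of the symmetric group, as a presented group. -/
abbrev SpinSym (n : ℕ) := PresentedGroup (spinRels n)

/-- The central element `z` of `S̃ₙ`. -/
def zt (n : ℕ) : SpinSym n := PresentedGroup.of (Sum.inr ())

/-- The generator `τ̃ᵢ` of `S̃ₙ`. -/
def tt (n : ℕ) (i : Fin (n-1)) : SpinSym n := PresentedGroup.of (Sum.inl i)

/-- `i` as an element of `Fin n`. -/
def finL (n : ℕ) (i : Fin (n-1)) : Fin n := ⟨i, by have := i.2; omega⟩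

/-- `i+1` as an element of `Fin n`. -/
def finR (n : ℕ) (i : Fin (n-1)) : Fin n := ⟨(i : ℕ) + 1, by have := i.2; omega⟩

/-- `τ̃ₖ` for a natural number index, `1` out of range. -/
def ttN (n : ℕ) (k : ℕ) : SpinSym n := if h : k < n - 1 then tt n ⟨k, h⟩ else 1

/-- For `i ≤ j`, the word `τ̃ᵢ·τ̃ᵢ₊₁⋯τ̃ⱼ₋₂·τ̃ⱼ₋₁·τ̃ⱼ₋₂⋯τ̃ᵢ₊₁·τ̃ᵢ` (equal to `1` when `i = j`). -/
def ttilCore (n i j : ℕ) : SpinSym n :=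
  (((List.range' i (j - i)) ++ (List.range' i (j - 1 - i)).reverse).map (ttN n)).prod

/-- The lifted transpositions `τ̃_{i,j}`, with `τ̃_{j,i} = z·τ̃_{i,j}` for `i < j`,
and `τ̃_{k,k} = 1`. -/
def ttil (n i j : ℕ) : SpinSym n := if j < i then zt n * ttilCore n j i else ttilCore n i j

/-- `i` is the sequence of indices of a factorization of `x` as a product of
transpositions `t_{i_0,0} ⋯ t_{i_{n-1},n-1}` with `i_k ≤ k`. -/
def IsFactorization (n : ℕ) (x : Equiv.Perm (Fin n)) (i : Fin n → Fin n) : Prop :=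
  (∀ k, i k ≤ k) ∧ x = ((List.finRange n).map (fun k => Equiv.swap (i k) k)).prod

/-- The section `s : Sₙ → S̃ₙ`, defined from the unique factorization
`x = t_{i_0,0} ⋯ t_{i_{n-1},n-1}` by `s x = τ̃_{i_0,0} ⋯ τ̃_{i_{n-1},n-1}`. -/
noncomputable def sec (n : ℕ) (x : Equiv.Perm (Fin n)) : SpinSym n :=
  if h : ∃ i, IsFactorization n x i then
    ((List.finRange n).map (fun k => ttil n (h.choose k).val k.val)).prod
  else 1

/-- The `2`-cocycle `c : Sₙ × Sₙ → ℤ/2ℤ` defined by `s(x)·s(y) = z^{c(x,y)}·s(x·y)`. -/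
noncomputable def coc (n : ℕ) (x y : Equiv.Perm (Fin n)) : ZMod 2 :=
  if sec n x * sec n y = sec n (x * y) then 0 else 1

/-! ### Groups satisfying the Coxeter relations of the symmetric group -/

/-- The descending product `t m * t (m - 1) * ⋯` with `d` factors. -/
def descProd {G : Type*} [Group G] (t : ℕ → G) (m : ℕ) : ℕ → G
  | 0 => 1
  | d + 1 => descProd t m d * t (m - d)

section Coxeter

variable {G : Type*} [Group G] {t : ℕ → G} {N : ℕ}

theorem descProd_mul_of_lt (hcomm : ∀ i j, i + 1 < j → j < N → t i * t j = t j * t i)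
    {m : ℕ} (hm : m < N) {k : ℕ} :
    ∀ d, k + d < m → descProd t m d * t k = t k * descProd t m d
  | 0, _ => by simp [descProd]
  | d + 1, h => by
    have ih := descProd_mul_of_lt hcomm hm (k := k) d (by omega)
    rw [descProd, mul_assoc, ← hcomm k (m - d) (by omega) (by omega), ← mul_assoc, ih, mul_assoc]

theorem descProd_mul_of_gt (hcomm : ∀ i j, i + 1 < j → j < N → t i * t j = t j * t i)
    (hbraid : ∀ i, i + 1 < N → t i * t (i + 1) * t i = t (i + 1) * t i * t (i + 1))
    {m : ℕ} (hm : m < N) {k : ℕ} (hk : k < m) :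
    ∀ d, d ≤ m + 1 → m < k + d → descProd t m d * t (k + 1) = t k * descProd t m d
  | 0, _, h => by omega
  | d + 1, hd, h => by
    rcases (show m < k + d ∨ m = k + d by omega) with h' | h'
    · have ih := descProd_mul_of_gt hcomm hbraid hm hk d (by omega) h'
      rw [descProd, mul_assoc, hcomm (m - d) (k + 1) (by omega) (by omega), ← mul_assoc, ih,
        mul_assoc]
    · obtain ⟨e, rfl⟩ : ∃ e, d = e + 1 := ⟨d - 1, by omega⟩
      have h1 : m - (e + 1) = k := by omega
      have h2 : m - e = k + 1 := by omega
      have hlt := descProd_mul_of_lt hcomm hm (k := k) e (by omega)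
      rw [descProd, descProd, h1, h2, mul_assoc, mul_assoc, ← mul_assoc (t (k + 1)),
        ← hbraid k (by omega), ← mul_assoc, ← mul_assoc, hlt, mul_assoc (t k), mul_assoc (t k)]

theorem exists_mul_descProd_of_mem_closure (hsq : ∀ i, i < N → t i * t i = 1)
    (hcomm : ∀ i j, i + 1 < j → j < N → t i * t j = t j * t i)
    (hbraid : ∀ i, i + 1 < N → t i * t (i + 1) * t i = t (i + 1) * t i * t (i + 1))
    {m : ℕ} (hm : m < N) {w : G} (hw : w ∈ Subgroup.closure (t '' Set.Iio (m + 1))) :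
    ∃ q ∈ Subgroup.closure (t '' Set.Iio m), ∃ d ≤ m + 1, w = q * descProd t m d := by
  have step : ∀ x y, y ∈ t '' Set.Iio (m + 1) →
      (∃ q ∈ Subgroup.closure (t '' Set.Iio m), ∃ d ≤ m + 1, x = q * descProd t m d) →
      ∃ q ∈ Subgroup.closure (t '' Set.Iio m), ∃ d ≤ m + 1, x * y = q * descProd t m d := by
    rintro _ _ ⟨k, hk, rfl⟩ ⟨q, hq, d, hd, rfl⟩
    have hk : k < m + 1 := hk
    have mem : ∀ l < m, q * t l ∈ Subgroup.closure (t '' Set.Iio m) := fun l hl =>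
      mul_mem hq (Subgroup.subset_closure ⟨l, hl, rfl⟩)
    rcases lt_trichotomy (k + d) m with h | h | h
    · refine ⟨_, mem k (by omega), d, hd, ?_⟩
      rw [mul_assoc, descProd_mul_of_lt hcomm hm d h, mul_assoc]
    · refine ⟨q, hq, d + 1, by omega, ?_⟩
      rw [descProd, show m - d = k by omega, mul_assoc]
    · rcases (show k + d = m + 1 ∨ m + 1 < k + d by omega) with h' | h'
      · obtain ⟨e, rfl⟩ : ∃ e, d = e + 1 := ⟨d - 1, by omega⟩
        refine ⟨q, hq, e, by omega, ?_⟩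
        rw [descProd, show m - e = k by omega, mul_assoc, mul_assoc, hsq k (by omega), mul_one]
      · obtain ⟨l, rfl⟩ : ∃ l, k = l + 1 := ⟨k - 1, by omega⟩
        refine ⟨_, mem l (by omega), d, hd, ?_⟩
        rw [mul_assoc, descProd_mul_of_gt hcomm hbraid hm (by omega) d hd (by omega), mul_assoc]
  induction hw using Subgroup.closure_induction_right with
  | one => exact ⟨1, one_mem _, 0, by omega, by simp [descProd]⟩
  | mul_right x hx y hy ih => exact step x y hy ih
  | mul_inv_cancel x hx y hy ih =>
    have hinv : y⁻¹ = y := by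
      obtain ⟨k, hk, rfl⟩ := hy
      have hk : k < m + 1 := hk
      exact inv_eq_of_mul_eq_one_left (hsq k (by omega))
    rw [hinv]
    exact step x y hy ih

theorem eq_one_of_mem_closure_of_map_eq_one (hsq : ∀ i, i < N → t i * t i = 1)
    (hcomm : ∀ i j, i + 1 < j → j < N → t i * t j = t j * t i)
    (hbraid : ∀ i, i + 1 < N → t i * t (i + 1) * t i = t (i + 1) * t i * t (i + 1))
    (p : G →* Perm (Fin (N + 1)))
    (hp : ∀ i (h : i < N), p (t i) = swap ⟨i, by omega⟩ ⟨i + 1, by omega⟩) :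
    ∀ m ≤ N, ∀ w ∈ Subgroup.closure (t '' Set.Iio m), p w = 1 → w = 1
  | 0, _, w, hw, _ => by simpa using hw
  | m + 1, hm, w, hw, h1 => by
    obtain ⟨q, hq, d, hd, rfl⟩ := exists_mul_descProd_of_mem_closure hsq hcomm hbraid hm hw
    have hfix : p q ⟨m + 1, by omega⟩ = ⟨m + 1, by omega⟩ := by
      have hle : Subgroup.closure (t '' Set.Iio m) ≤
          (MulAction.stabilizer (Perm (Fin (N + 1)))
            (⟨m + 1, by omega⟩ : Fin (N + 1))).comap p := by
        rw [Subgroup.closure_le]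
        rintro _ ⟨k, hk, rfl⟩
        have hk : k < m := hk
        simp only [SetLike.mem_coe, Subgroup.mem_comap, MulAction.mem_stabilizer_iff,
          Perm.smul_def, hp k (by omega)]
        apply swap_apply_of_ne_of_ne <;> simp [Fin.ext_iff] <;> omega
      exact hle hq
    have hmap : ∀ e (he : e ≤ m + 1),
        p (descProd t m e) ⟨m + 1 - e, by omega⟩ = ⟨m + 1, by omega⟩ := by
      intro e
      induction e with
      | zero => intro _; simp [descProd]
      | succ e ih =>
        intro he
        have hs := swap_apply_left (⟨m - e, by omega⟩ : Fin (N + 1)) ⟨m - e + 1, by omega⟩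
        rw [descProd, map_mul, hp _ (by omega), Perm.mul_apply]
        simp only [Nat.add_sub_add_right]
        rw [hs, ← ih (by omega)]
        congr 2
        omega
    have hval := hmap d hd
    have hd0 : d = 0 := by
      have h2 : p (q * descProd t m d) ⟨m + 1 - d, by omega⟩ = ⟨m + 1, by omega⟩ := by
        rw [map_mul, Perm.mul_apply, hval, hfix]
      rw [h1, Perm.one_apply, Fin.mk.injEq] at h2
      omega
    subst hd0
    simp only [descProd, mul_one] at h1 ⊢
    exact eq_one_of_mem_closure_of_map_eq_one hsq hcomm hbraid p hp m (by omega) q hq h1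

end Coxeter

/-! ### The relations and the universal property of the spin extension -/

theorem zt_mul_self (n : ℕ) : zt n * zt n = 1 :=
  PresentedGroup.one_of_mem (rels := spinRels n) (x := zF n * zF n) (by simp [spinRels])

theorem zt_mul_tt (n : ℕ) (i : Fin (n - 1)) : zt n * tt n i = tt n i * zt n :=
  PresentedGroup.mk_eq_mk_of_mul_inv_mem (rels := spinRels n)
    (x := zF n * tF n i) (y := tF n i * zF n)
    (Or.inl <| Or.inl <| Or.inl <| Or.inr ⟨i, rfl⟩)

theorem tt_mul_self (n : ℕ) (i : Fin (n - 1)) : tt n i * tt n i = zt n :=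
  PresentedGroup.mk_eq_mk_of_mul_inv_mem (rels := spinRels n)
    (x := tF n i * tF n i) (y := zF n) (Or.inl <| Or.inl <| Or.inr ⟨i, rfl⟩)

theorem tt_mul_tt (n : ℕ) (i j : Fin (n - 1)) (h : 1 < |(i : ℤ) - (j : ℤ)|) :
    tt n i * tt n j = zt n * tt n j * tt n i :=
  PresentedGroup.mk_eq_mk_of_mul_inv_mem (rels := spinRels n)
    (x := tF n i * tF n j) (y := zF n * tF n j * tF n i) (Or.inl <| Or.inr ⟨i, j, h, rfl⟩)

theorem tt_braid (n : ℕ) (i j : Fin (n - 1)) (h : (j : ℕ) = (i : ℕ) + 1) :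
    tt n i * tt n j * tt n i = tt n j * tt n i * tt n j :=
  PresentedGroup.mk_eq_mk_of_mul_inv_mem (rels := spinRels n)
    (x := tF n i * tF n j * tF n i) (y := tF n j * tF n i * tF n j) (Or.inr ⟨i, j, h, rfl⟩)

theorem commute_zt (n : ℕ) (g : SpinSym n) : zt n * g = g * zt n := by
  have hg : g ∈ Subgroup.centralizer {zt n} := by
    refine PresentedGroup.generated_by _ _ (fun x => ?_) g
    rw [Subgroup.mem_centralizer_singleton_iff]
    rcases x with i | u
    · exact (zt_mul_tt n i).symm
    · rfl
  exact (Subgroup.mem_centralizer_singleton_iff.1 hg).symm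

theorem exists_spinSym_hom {G : Type*} [Group G] (n : ℕ) (f : Fin (n - 1) → G) (z : G)
    (hz : z * z = 1) (hzf : ∀ i, z * f i = f i * z) (hf : ∀ i, f i * f i = z)
    (hcomm : ∀ i j : Fin (n - 1), 1 < |(i : ℤ) - (j : ℤ)| → f i * f j = z * f j * f i)
    (hbraid : ∀ i j : Fin (n - 1), (j : ℕ) = (i : ℕ) + 1 →
      f i * f j * f i = f j * f i * f j) :
    ∃ φ : SpinSym n →* G, (∀ i, φ (tt n i) = f i) ∧ φ (zt n) = z := by
  have hrel : ∀ r ∈ spinRels n, FreeGroup.lift (Sum.elim f fun _ => z) r = 1 := by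
    rintro r ((((h | ⟨i, h⟩) | ⟨i, h⟩) | ⟨i, j, hij, h⟩) | ⟨i, j, hij, h⟩)
    · rw [Set.mem_singleton_iff.1 h]
      simpa [zF] using hz
    all_goals subst h; simp only [zF, tF, map_mul, map_inv, FreeGroup.lift_apply_of, Sum.elim_inl,
      Sum.elim_inr, mul_inv_eq_one]
    · exact hzf i
    · exact hf i
    · exact hcomm i j hij
    · exact hbraid i j hij
  exact ⟨PresentedGroup.toGroup hrel, fun i => PresentedGroup.toGroup.of hrel,
    PresentedGroup.toGroup.of hrel⟩

/-! ### The central element is non-trivial -/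

/-- The root `eᵢ - eᵢ₊₁`. -/
def simpleRoot (n : ℕ) (i : Fin (n - 1)) : Fin n → ℚ :=
  Pi.single (finL n i) 1 - Pi.single (finR n i) 1

/-- The negative definite form in which every simple root has value `-1`. -/
noncomputable def rootForm (n : ℕ) : QuadraticForm ℚ (Fin n → ℚ) :=
  QuadraticMap.weightedSumSquares ℚ fun _ : Fin n => (-1 / 2 : ℚ)

theorem rootForm_apply (n : ℕ) (v : Fin n → ℚ) : rootForm n v = -1 / 2 * (v ⬝ᵥ v) := by
  simp [rootForm, QuadraticMap.weightedSumSquares_apply, dotProduct, Finset.mul_sum]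

theorem polar_rootForm (n : ℕ) (v w : Fin n → ℚ) :
    QuadraticMap.polar (rootForm n) v w = -(v ⬝ᵥ w) := by
  simp only [QuadraticMap.polar, rootForm_apply, add_dotProduct, dotProduct_add,
    dotProduct_comm w v]
  ring

theorem simpleRoot_dotProduct (n : ℕ) (i j : Fin (n - 1)) :
    simpleRoot n i ⬝ᵥ simpleRoot n j =
      ((if (i : ℕ) = j then 1 else 0) - (if (i : ℕ) = j + 1 then 1 else 0)) -
        ((if (i : ℕ) + 1 = j then 1 else 0) - (if (i : ℕ) = j then 1 else 0)) := by
  rw [dotProduct_comm]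
  simp [simpleRoot, Pi.single_apply, finL, finR]

theorem zt_ne_one (n : ℕ) : zt n ≠ 1 := by
  let C := CliffordAlgebra (rootForm n)
  let a : Fin (n - 1) → C := fun i => CliffordAlgebra.ι (rootForm n) (simpleRoot n i)
  have hsq : ∀ i, a i * a i = -1 := by
    intro i
    simp only [a, C]
    rw [CliffordAlgebra.ι_sq_scalar, rootForm_apply, simpleRoot_dotProduct]
    norm_num
  have hadd : ∀ i j, a i * a j + a j * a i =
      algebraMap ℚ C (-(simpleRoot n i ⬝ᵥ simpleRoot n j)) := by
    intro i j
    simp only [a, C]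
    rw [CliffordAlgebra.ι_mul_ι_add_swap, polar_rootForm]
  let f : Fin (n - 1) → Cˣ := fun i =>
    ⟨a i, -a i, by rw [mul_neg, hsq, neg_neg], by rw [neg_mul, hsq, neg_neg]⟩
  obtain ⟨φ, -, hφ⟩ := exists_spinSym_hom n f (-1) (by simp) (by simp)
    (fun i => Units.ext (by simpa [f] using hsq i))
    (by
      intro i j hij
      have h := hadd i j
      rw [simpleRoot_dotProduct, if_neg, if_neg, if_neg] at h
      · apply Units.ext
        simpa [f] using eq_neg_of_add_eq_zero_left (by simpa using h)
      all_goals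
        intro h
        rw [lt_abs] at hij
        omega)
    (by
      intro i j hij
      have h := hadd i j
      rw [simpleRoot_dotProduct, if_neg (by omega), if_neg (by omega), if_pos hij.symm] at h
      have h' : a i * a j + a j * a i = 1 := by simpa using h
      apply Units.ext
      change a i * a j * a i = a j * a i * a j
      have e1 : a i * a j * a i = a i + a j := by
        rw [mul_assoc, eq_sub_of_add_eq' h', mul_sub, ← mul_assoc, hsq, mul_one,
          neg_one_mul, sub_neg_eq_add]
      have e2 : a j * a i * a j = a i + a j := by
        rw [mul_assoc, eq_sub_of_add_eq h', mul_sub, ← mul_assoc, hsq, mul_one,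
          neg_one_mul, sub_neg_eq_add, add_comm]
      rw [e1, e2])
  intro hz
  rw [hz, map_one] at hφ
  have h1 : (1 : C) = -1 := congrArg Units.val hφ
  have : Invertible (2 : ℚ) := invertibleOfNonzero two_ne_zero
  have h2 : (algebraMap ℚ C) 2 = 0 := by
    rw [map_ofNat, ← one_add_one_eq_two]
    nth_rewrite 2 [h1]
    simp
  exact two_ne_zero ((map_eq_zero (algebraMap ℚ C)).1 h2)

/-! ### The projection to the symmetric group -/

theorem swap_mul_swap_mul_swap_left {α : Type*} [DecidableEq α] {a b c : α} (hbc : b ≠ c)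
    (hac : a ≠ c) : swap a b * swap b c * swap a b = swap a c := by
  rw [swap_comm a b, swap_comm b c, swap_mul_swap_mul_swap hbc.symm hac.symm]

theorem swap_braid {α : Type*} [DecidableEq α] {a b c : α} (hab : a ≠ b) (hbc : b ≠ c)
    (hac : a ≠ c) :
    swap a b * swap b c * swap a b = swap b c * swap a b * swap b c := by
  rw [swap_mul_swap_mul_swap_left hbc hac, swap_mul_swap_mul_swap hab hac, swap_comm]

theorem exists_proj (n : ℕ) : ∃ p : SpinSym n →* Perm (Fin n),
    (∀ i, p (tt n i) = swap (finL n i) (finR n i)) ∧ p (zt n) = 1 := by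
  apply exists_spinSym_hom
  · simp
  · simp
  · simp
  · intro i j hij
    rw [one_mul]
    apply Perm.Disjoint.commute
    rw [lt_abs] at hij
    apply Perm.disjoint_swap_swap
    simp [finL, finR, Fin.ext_iff]
    omega
  · intro i j hij
    have h : finL n j = finR n i := Fin.ext hij
    rw [h]
    apply swap_braid <;> simp [finL, finR, Fin.ext_iff] <;> omega

/-- The projection `S̃ₙ → Sₙ`. -/
noncomputable def proj (n : ℕ) : SpinSym n →* Perm (Fin n) := (exists_proj n).choose

theorem proj_tt (n : ℕ) (i : Fin (n - 1)) : proj n (tt n i) = swap (finL n i) (finR n i) :=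
  (exists_proj n).choose_spec.1 i

theorem proj_zt (n : ℕ) : proj n (zt n) = 1 := (exists_proj n).choose_spec.2

theorem ttN_of_lt {n k : ℕ} (h : k < n - 1) : ttN n k = tt n ⟨k, h⟩ := dif_pos h

theorem eq_one_or_eq_zt_of_proj_eq_one {n : ℕ} (hn : 2 ≤ n) {g : SpinSym n}
    (hg : proj n g = 1) : g = 1 ∨ g = zt n := by
  obtain ⟨N, rfl⟩ : ∃ N, n = N + 1 := ⟨n - 1, by omega⟩
  have hnormal : (Subgroup.zpowers (zt (N + 1))).Normal := by
    refine ⟨fun a ha b => ?_⟩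
    obtain ⟨k, rfl⟩ := Subgroup.mem_zpowers_iff.1 ha
    have hc : Commute (zt (N + 1)) b := commute_zt _ b
    rw [← (hc.zpow_left k).eq, mul_inv_cancel_right]
    exact ha
  let π := QuotientGroup.mk' (Subgroup.zpowers (zt (N + 1)))
  have hz : π (zt (N + 1)) = 1 :=
    (QuotientGroup.eq_one_iff _).2 (Subgroup.mem_zpowers _)
  let p := QuotientGroup.lift (Subgroup.zpowers (zt (N + 1))) (proj (N + 1)) (by
    rw [Subgroup.zpowers_le]
    exact proj_zt _)
  have key : π g = 1 := by
    refine eq_one_of_mem_closure_of_map_eq_one (t := fun k => π (ttN (N + 1) k)) (N := N)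
      ?_ ?_ ?_ p ?_ N le_rfl (π g) ?_ hg
    · intro i hi
      rw [← map_mul, ttN_of_lt hi, tt_mul_self, hz]
    · intro i j hij hj
      rw [← map_mul, ttN_of_lt (k := i) (by omega), ttN_of_lt hj, tt_mul_tt, map_mul, map_mul, hz,
        one_mul]
      rw [lt_abs]
      simp only
      omega
    · intro i hi
      simp only [← map_mul]
      rw [ttN_of_lt (k := i) (by omega), ttN_of_lt hi, tt_braid _ _ _ rfl]
    · intro i hi
      change proj (N + 1) (ttN (N + 1) i) = _
      rw [ttN_of_lt hi, proj_tt]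
      rfl
    · change g ∈ (Subgroup.closure _).comap π
      refine PresentedGroup.generated_by _ _ (fun x => ?_) g
      rcases x with i | u
      · refine Subgroup.subset_closure ⟨i, i.2, ?_⟩
        simp only
        rw [ttN_of_lt i.2]
        rfl
      · change π (zt (N + 1)) ∈ Subgroup.closure _
        rw [hz]
        exact one_mem _
  obtain ⟨k, rfl⟩ := Subgroup.mem_zpowers_iff.1 ((QuotientGroup.eq_one_iff g).1 key)
  have h2 : zt (N + 1) ^ (2 : ℤ) = 1 := by rw [zpow_two, zt_mul_self]
  rcases Int.even_or_odd' k with ⟨l, rfl | rfl⟩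
  · left; rw [zpow_mul, h2, one_zpow]
  · right; rw [zpow_add, zpow_mul, h2, one_zpow, one_mul, zpow_one]

theorem eq_or_eq_zt_mul_of_proj_eq {n : ℕ} (hn : 2 ≤ n) {g h : SpinSym n}
    (hgh : proj n g = proj n h) : g = h ∨ g = zt n * h := by
  rcases eq_one_or_eq_zt_of_proj_eq_one hn (g := g * h⁻¹)
    (by rw [map_mul, map_inv, hgh, mul_inv_cancel]) with hone | hzt
  · exact Or.inl (mul_inv_eq_one.1 hone)
  · exact Or.inr (mul_inv_eq_iff_eq_mul.1 hzt)

/-! ### Lifted transpositions -/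

theorem ttilCore_self (n i : ℕ) : ttilCore n i i = 1 := by simp [ttilCore]

theorem ttilCore_succ (n i : ℕ) : ttilCore n i (i + 1) = ttN n i := by
  simp [ttilCore]

theorem ttilCore_add_two (n i d : ℕ) :
    ttilCore n i (i + d + 2) = ttN n i * ttilCore n (i + 1) (i + d + 2) * ttN n i := by
  have h1 : i + d + 2 - i = d + 1 + 1 := by omega
  have h2 : i + d + 2 - 1 - i = d + 1 := by omega
  have h3 : i + d + 2 - (i + 1) = d + 1 := by omega
  have h4 : i + d + 2 - 1 - (i + 1) = d := by omega
  rw [ttilCore, ttilCore, h1, h2, h3, h4, List.range'_succ (s := i), List.range'_succ (s := i)]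
  simp [mul_assoc]

theorem ttilCore_mul_self (n : ℕ) : ∀ d i, i + d + 1 < n →
    ttilCore n i (i + d + 1) * ttilCore n i (i + d + 1) = zt n
  | 0, i, h => by
    rw [add_zero, ttilCore_succ, ttN_of_lt (by omega), tt_mul_self]
  | d + 1, i, h => by
    have ih := ttilCore_mul_self n d (i + 1) (by omega)
    rw [show i + 1 + d + 1 = i + d + 2 by ring] at ih
    rw [show i + (d + 1) + 1 = i + d + 2 by ring, ttilCore_add_two, ttN_of_lt (by omega)]
    set a := tt n ⟨i, by omega⟩
    set w := ttilCore n (i + 1) (i + d + 2)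
    have ha : a * a = zt n := tt_mul_self n _
    calc a * w * a * (a * w * a) = a * w * (a * a) * (w * a) := by group
      _ = a * w * zt n * (w * a) := by rw [ha]
      _ = zt n * (a * w) * (w * a) := by rw [commute_zt]
      _ = zt n * a * (w * w) * a := by group
      _ = zt n * a * zt n * a := by rw [ih]
      _ = zt n * (zt n * a) * a := by rw [mul_assoc _ a, ← commute_zt n a]
      _ = zt n * zt n * (a * a) := by group
      _ = zt n := by rw [ha, zt_mul_self, one_mul]

theorem proj_ttilCore (n : ℕ) : ∀ d i (h : i + d + 1 < n),
    proj n (ttilCore n i (i + d + 1)) = swap ⟨i, by omega⟩ ⟨i + d + 1, h⟩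
  | 0, i, h => by
    simp only [add_zero]
    rw [ttilCore_succ, ttN_of_lt (by omega), proj_tt]
    rfl
  | d + 1, i, h => by
    have ih := proj_ttilCore n d (i + 1) (by omega)
    simp only [show i + 1 + d + 1 = i + d + 2 by ring] at ih
    simp only [show i + (d + 1) + 1 = i + d + 2 by ring]
    rw [ttilCore_add_two, ttN_of_lt (by omega), map_mul, map_mul, proj_tt, ih]
    apply swap_mul_swap_mul_swap_left <;> simp [finL, finR, Fin.ext_iff] <;> omega

theorem proj_ttil {n : ℕ} {i j : Fin n} (hij : i ≤ j) :
    proj n (ttil n i j) = swap i j := by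
  have hij' : (i : ℕ) ≤ j := hij
  rw [ttil, if_neg (by omega)]
  rcases hij.eq_or_lt with rfl | hlt
  · rw [ttilCore_self, map_one, swap_self]
    rfl
  · obtain ⟨d, hd⟩ := Nat.exists_eq_add_of_lt (show (i : ℕ) < j from hlt)
    have h := proj_ttilCore n d i (hd ▸ j.2)
    simpa only [← hd] using h

/-! ### The section -/

theorem exists_take_factorization (n : ℕ) : ∀ m ≤ n, ∀ x : Perm (Fin n),
    (∀ k : Fin n, m ≤ k → x k = k) → ∃ i : Fin n → Fin n, (∀ k, i k ≤ k) ∧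
      x = (((List.finRange n).take m).map fun k => swap (i k) k).prod
  | 0, _, x, hx => ⟨id, fun _ => le_rfl, by ext k; simp [hx k (Nat.zero_le _)]⟩
  | m + 1, hm, x, hx => by
    let M : Fin n := ⟨m, hm⟩
    have hM : x⁻¹ M ≤ M := by
      by_contra! hlt
      have hlt' : m < (x⁻¹ M : Fin n) := hlt
      have := hx (x⁻¹ M) hlt'
      rw [show x (x⁻¹ M) = M from x.apply_symm_apply M] at this
      exact hlt.ne this
    obtain ⟨i, hi, hxi⟩ := exists_take_factorization n m (by omega) (x * swap (x⁻¹ M) M) (by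
      intro k hk
      rcases eq_or_ne k M with rfl | hkM
      · simp
      · have hk' : m + 1 ≤ (k : ℕ) := by
          have : (k : ℕ) ≠ m := fun h => hkM (Fin.ext h)
          omega
        have hne : k ≠ x⁻¹ M := by
          rintro rfl
          have : (x⁻¹ M : ℕ) ≤ m := hM
          omega
        rw [Perm.mul_apply, swap_apply_of_ne_of_ne hne hkM, hx k hk'])
    refine ⟨Function.update i M (x⁻¹ M), fun k => ?_, ?_⟩
    · rcases eq_or_ne k M with rfl | hkM
      · simpa using hM
      · simpa [hkM] using hi k
    · rw [List.take_succ_eq_append_getElem (by simpa using hm), List.map_append, List.prod_append]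
      have hcongr : ((List.finRange n).take m).map
          (fun k => swap (Function.update i M (x⁻¹ M) k) k) =
          ((List.finRange n).take m).map fun k => swap (i k) k := by
        apply List.map_congr_left
        intro k hk
        obtain ⟨l, hl, rfl⟩ := List.mem_take_iff_getElem.1 hk
        rw [Function.update_of_ne]
        simp only [List.getElem_finRange, M, ne_eq, Fin.ext_iff, Fin.val_cast]
        omega
      rw [hcongr, ← hxi]
      have hlast : (List.finRange n)[m]'(by simpa using hm) = M := by simp [M]
      simp [hlast, mul_assoc]

theorem exists_isFactorization (n : ℕ) (x : Perm (Fin n)) : ∃ i, IsFactorization n x i := by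
  obtain ⟨i, hi, hx⟩ := exists_take_factorization n n le_rfl x (fun k hk => by omega)
  refine ⟨i, hi, ?_⟩
  rwa [List.take_of_length_le (by simp)] at hx

theorem proj_sec (n : ℕ) (x : Perm (Fin n)) : proj n (sec n x) = x := by
  have h := exists_isFactorization n x
  rw [sec, dif_pos h, map_list_prod, List.map_map]
  refine Eq.trans ?_ h.choose_spec.2.symm
  congr 1
  exact List.map_congr_left fun k _ => proj_ttil (h.choose_spec.1 k)

theorem sec_swap_mul_self {n : ℕ} (hn : 2 ≤ n) {i j : Fin n} (hij : i ≠ j) :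
    sec n (swap i j) * sec n (swap i j) = zt n := by
  wlog hlt : i < j generalizing i j
  · rw [swap_comm]
    exact this hij.symm (lt_of_le_of_ne (not_lt.1 hlt) hij.symm)
  obtain ⟨d, hd⟩ := Nat.exists_eq_add_of_lt (show (i : ℕ) < j from hlt)
  have hsq := ttilCore_mul_self n d i (hd ▸ j.2)
  have hproj : proj n (sec n (swap i j)) = proj n (ttilCore n i (i + d + 1)) := by
    rw [proj_sec, proj_ttilCore n d i (hd ▸ j.2)]
    congr 1
    exact Fin.ext hd
  rcases eq_or_eq_zt_mul_of_proj_eq hn hproj with h | h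
  · rw [h, hsq]
  · rw [h, mul_assoc, ← mul_assoc _ (zt n), ← commute_zt n (ttilCore _ _ _), mul_assoc, hsq,
      zt_mul_self, mul_one]

theorem cocycle_annulus_rule (n : ℕ) (hn : 2 ≤ n) (i j : Fin n) (hij : i ≠ j)
    (x : Equiv.Perm (Fin n)) :
    coc n (Equiv.swap i j) x + coc n (Equiv.swap i j) (Equiv.swap i j * x) = 1 := by
  have hsq := sec_swap_mul_self hn hij
  have hx := eq_or_eq_zt_mul_of_proj_eq hn (g := sec n (swap i j) * sec n x)
    (h := sec n (swap i j * x)) (by simp only [map_mul, proj_sec])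
  have hxx : swap i j * (swap i j * x) = x := swap_mul_self_mul i j x
  have hz := zt_ne_one n
  rw [coc, coc, hxx]
  set s := sec n (swap i j)
  have hmul : s * (s * sec n x) = zt n * sec n x := by rw [← mul_assoc, hsq]
  rcases hx with h | h
  · rw [if_pos h, if_neg, zero_add]
    rw [← h, hmul]
    simpa using hz
  · rw [if_neg, if_pos, add_zero]
    · have h' : sec n (swap i j * x) = zt n * (s * sec n x) := by
        rw [h, ← mul_assoc, zt_mul_self, one_mul]
      rw [h', ← mul_assoc, ← commute_zt, mul_assoc, hmul, ← mul_assoc, zt_mul_self, one_mul]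
    · rw [h]
      simpa using hz
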